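/- Under serial dictatorship with N ≤ K and distinct utilities, every stable matching coincides with the greedy matching m*: if m is an injective map from players to arms with no blocking pair, then m(i) = m*(i) for every player i. -/

import Mathlib

/-- Under serial dictatorship all arms share the same preference over players:
every arm prefers player `i` to player `i'` whenever `i < i'` (players are
indexed by `Fin N` in order of decreasing priority).  `IsGreedy μ m` says that
`m` is the greedy matching `m*`: for each player `i` (in increasing order of
index), `m i` is an arm not taken by any higher-ranked player and it maximizes
`μ i` over the arms not taken by higher-ranked players. -/
def IsGreedy {N K : ℕ} (μ : Fin N → Fin K → ℝ) (m : Fin N → Fin K) : Prop :=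
  ∀ i : Fin N,
    (∀ j : Fin N, j < i → m j ≠ m i) ∧
    (∀ k : Fin K, (∀ j : Fin N, j < i → m j ≠ k) → μ i k ≤ μ i (m i))

/-- A pair `(i, k)` blocks the matching `m` if player `i` strictly prefers arm
`k` to its matched arm `m i`, and arm `k` is either unmatched under `m` or
matched to a player `i'` ranked lower than `i` (i.e. `i < i'`; under serial
dictatorship every arm prefers lower-indexed players). -/
def Blocks {N K : ℕ} (μ : Fin N → Fin K → ℝ) (m : Fin N → Fin K)
    (i : Fin N) (k : Fin K) : Prop :=
  μ i (m i) < μ i k ∧ ((∀ i' : Fin N, m i' ≠ k) ∨ (∃ i' : Fin N, m i' = k ∧ i < i'))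

/-- A matching is stable if no player-arm pair blocks it. -/
def IsStable {N K : ℕ} (μ : Fin N → Fin K → ℝ) (m : Fin N → Fin K) : Prop :=
  ¬ ∃ (i : Fin N) (k : Fin K), Blocks μ m i k

/-- Under serial dictatorship with `N ≤ K`, positive utilities, and distinct
utilities, every stable matching coincides with the greedy matching `m*`:
if `m` is injective and no pair blocks it, then `m = m*`. -/
theorem stable_eq_greedy
    {N K : ℕ} (hNK : N ≤ K) (μ : Fin N → Fin K → ℝ)
    (hpos : ∀ (i : Fin N) (k : Fin K), 0 < μ i k)
    (hdist : ∀ (i : Fin N) (k k' : Fin K), k ≠ k' → μ i k ≠ μ i k')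
    (mstar : Fin N → Fin K) (hgreedy : IsGreedy μ mstar)
    (m : Fin N → Fin K) (hinj : Function.Injective m) (hstable : IsStable μ m) :
    ∀ i : Fin N, m i = mstar i := by
  intro i
  induction i using WellFoundedLT.induction with
  | ind i ih =>
  by_contra hne
  have hle : μ i (m i) ≤ μ i (mstar i) := by
    apply (hgreedy i).2
    intro j hj h
    rw [← ih j hj] at h
    exact (ne_of_lt hj) (hinj h)
  have hlt : μ i (m i) < μ i (mstar i) := lt_of_le_of_ne hle (hdist i _ _ hne)
  apply hstable
  refine ⟨i, mstar i, hlt, ?_⟩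
  by_cases h : ∃ i', m i' = mstar i
  · obtain ⟨i', hi'⟩ := h
    refine Or.inr ⟨i', hi', ?_⟩
    rcases lt_trichotomy i i' with h1 | h1 | h1
    · exact h1
    · subst h1
      exact absurd hi' hne
    · exact absurd ((ih i' h1).symm.trans hi') ((hgreedy i).1 i' h1)
  · exact Or.inl (fun i' hi' => h ⟨i', hi'⟩)
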